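/- Every infinite trace of a parallel composition decomposes into component traces at least one of which is infinite: if u ∈ traces^ω(P ‖_A Q), then there exist u₁ ∈ traces(P) ∪ traces^ω(P) and u₂ ∈ traces(Q) ∪ traces^ω(Q) with u ∈ u₁ ‖_A u₂ and (u₁ infinite or u₂ infinite). -/

import Mathlib

open scoped Classical

namespace CSPLL

variable {E : Type*}

/-- The length-`n` prefix of an infinite word. -/
def pref (u : ℕ → E) (n : ℕ) : List E := (List.range n).map u

/-- `u ∈ traces^ω(T)`: every finite prefix of `u` lies in `T`. -/
def InfTrace (T : Set (List E)) (u : ℕ → E) : Prop := ∀ n, pref u n ∈ T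

def PrefixClosed (T : Set (List E)) : Prop := ∀ s t : List E, s ++ t ∈ T → s ∈ T

/-- `Sync A s t u` : `u ∈ s ‖_A t`, the synchronised-interleaving operator on
finite traces (events in `A` must be matched by both sides, other events
interleave freely). -/
inductive Sync (A : Set E) : List E → List E → List E → Prop
  | nil : Sync A [] [] []
  | left {b s t u} : b ∉ A → Sync A s t u → Sync A (b :: s) t (b :: u)
  | right {b s t u} : b ∉ A → Sync A s t u → Sync A s (b :: t) (b :: u)
  | both {a s t u} : a ∈ A → Sync A s t u → Sync A (a :: s) (a :: t) (a :: u)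
  | stuckLeft {a t} : a ∈ A → Sync A [] (a :: t) []
  | stuckRight {a s} : a ∈ A → Sync A (a :: s) [] []

/-- The length-`n` prefix of a finite-or-infinite trace. -/
def prefOf : List E ⊕ (ℕ → E) → ℕ → List E
  | Sum.inl s, n => s.take n
  | Sum.inr v, n => pref v n

/-- Membership of a finite-or-infinite trace in `traces(T) ∪ traces^ω(T)`. -/
def MemTr (T : Set (List E)) : List E ⊕ (ℕ → E) → Prop
  | Sum.inl s => s ∈ T
  | Sum.inr v => InfTrace T v

/-- `u ∈ u₁ ‖_A u₂` for the infinite trace `u` and finite-or-infinite traces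
`u₁, u₂`: extension of `‖_A` via limits of chains of synchronised prefixes. -/
def InfSyncG (A : Set E) (x y : List E ⊕ (ℕ → E)) (u : ℕ → E) : Prop :=
  ∃ k₁ k₂ : ℕ → ℕ, Monotone k₁ ∧ Monotone k₂ ∧
    (∀ m, ∃ n, prefOf x m <+: prefOf x (k₁ n)) ∧
    (∀ m, ∃ n, prefOf y m <+: prefOf y (k₂ n)) ∧
    ∀ n, Sync A (prefOf x (k₁ n)) (prefOf y (k₂ n)) (pref u n)

noncomputable def F (p : ℕ → Prop) (u : ℕ → E) : ℕ → List E
  | 0 => []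
  | n+1 => F p u n ++ (if p n then [u n] else [])

theorem F_cons (p : ℕ → Prop) (u : ℕ → E) (n : ℕ) :
    F p u (n+1) = (if p 0 then [u 0] else []) ++ F (fun i => p (i+1)) (fun i => u (i+1)) n := by
  induction n with
  | zero => simp [F]
  | succ n ih =>
    rw [F, ih]
    simp [F]

theorem pref_cons (u : ℕ → E) (n : ℕ) :
    pref u (n+1) = u 0 :: pref (fun i => u (i+1)) n := by
  simp [pref, List.range_succ_eq_map, Function.comp_def]

theorem F_sync (A : Set E) (n : ℕ) : ∀ (u : ℕ → E) (c : ℕ → Bool),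
    Sync A (F (fun i => u i ∈ A ∨ c i = true) u n) (F (fun i => u i ∈ A ∨ c i = false) u n)
      (pref u n) := by
  induction n with
  | zero => intro u c; exact Sync.nil
  | succ n ih =>
    intro u c
    have := ih (fun i => u (i+1)) (fun i => c (i+1))
    rw [F_cons, F_cons, pref_cons]
    by_cases h : u 0 ∈ A
    · simpa [h] using Sync.both h this
    · cases hc : c 0
      · simpa [h, hc] using Sync.right h this
      · simpa [h, hc] using Sync.left h this

theorem sync_F {A : Set E} {s t w : List E} (h : Sync A s t w) : ∀ (u : ℕ → E) (n : ℕ),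
    w = pref u n → ∃ c : ℕ → Bool, F (fun i => u i ∈ A ∨ c i = true) u n <+: s ∧
      F (fun i => u i ∈ A ∨ c i = false) u n <+: t := by
  have key : ∀ (u : ℕ → E) (n : ℕ), [] = pref u n → n = 0 := by
    intro u n h
    simpa [pref] using (congrArg List.length h).symm
  induction h with
  | nil => intro u n h; cases key u n h; exact ⟨fun _ => true, by simp [F]⟩
  | stuckLeft _ => intro u n h; cases key u n h; exact ⟨fun _ => true, by simp [F]⟩
  | stuckRight _ => intro u n h; cases key u n h; exact ⟨fun _ => true, by simp [F]⟩
  | left hb _ ih =>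
    intro u n h
    cases n with
    | zero => simp [pref] at h
    | succ n =>
      rw [pref_cons] at h
      obtain ⟨rfl, h'⟩ := List.cons.inj h
      obtain ⟨c, h1, h2⟩ := ih _ _ h'
      refine ⟨fun i => Nat.casesOn i true c, ?_⟩
      rw [F_cons, F_cons]
      simpa [hb] using ⟨h1, h2⟩
  | right hb _ ih =>
    intro u n h
    cases n with
    | zero => simp [pref] at h
    | succ n =>
      rw [pref_cons] at h
      obtain ⟨rfl, h'⟩ := List.cons.inj h
      obtain ⟨c, h1, h2⟩ := ih _ _ h'
      refine ⟨fun i => Nat.casesOn i false c, ?_⟩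
      rw [F_cons, F_cons]
      simpa [hb] using ⟨h1, h2⟩
  | both hb _ ih =>
    intro u n h
    cases n with
    | zero => simp [pref] at h
    | succ n =>
      rw [pref_cons] at h
      obtain ⟨rfl, h'⟩ := List.cons.inj h
      obtain ⟨c, h1, h2⟩ := ih _ _ h'
      refine ⟨fun i => Nat.casesOn i false c, ?_⟩
      rw [F_cons, F_cons]
      simpa [hb] using ⟨h1, h2⟩

theorem F_locConst (A : Set E) (u : ℕ → E) (b : Bool) (n : ℕ) :
    IsLocallyConstant (fun c : ℕ → Bool => F (fun i => u i ∈ A ∨ c i = b) u n) := by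
  induction n with
  | zero => exact IsLocallyConstant.const _
  | succ n ih =>
    have h : IsLocallyConstant (fun c : ℕ → Bool => c n) :=
      (IsLocallyConstant.iff_continuous _).2 (continuous_apply n)
    convert ih.comp₂ h (fun l d => l ++ (if u n ∈ A ∨ d = b then [u n] else [])) using 2
    simp only [F]
    congr

/-- Limit of a chain of lists. -/
theorem chain_limit (T : Set (List E)) (L : ℕ → List E) (hL : ∀ n, L n <+: L (n+1))
    (hP : PrefixClosed T) (hT : ∀ n, L n ∈ T) :
    ∃ x : List E ⊕ (ℕ → E), MemTr T x ∧ (∀ n, prefOf x (L n).length = L n) ∧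
      (∀ m, ∃ n, prefOf x m <+: L n) ∧ (x.isRight = true ∨ ∃ B, ∀ n, (L n).length ≤ B) := by
  have mono : ∀ m n, m ≤ n → L m <+: L n := by
    intro m n h
    induction h with
    | refl => exact List.prefix_rfl
    | step _ ih => exact ih.trans (hL _)
  by_cases hB : ∃ B, ∀ n, (L n).length ≤ B
  · obtain ⟨N, hN⟩ : ∃ N, ∀ n, (L n).length ≤ (L N).length := by
      obtain ⟨B, hB⟩ := hB
      have hfin : (Set.range fun n => (L n).length).Finite :=
        (Set.finite_Iic B).subset (by rintro _ ⟨n, rfl⟩; exact hB n)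
      obtain ⟨_, ⟨⟨N, rfl⟩, h⟩⟩ := hfin.exists_maximal (Set.range_nonempty _)
      refine ⟨N, fun n => ?_⟩
      by_contra hc
      push Not at hc
      exact absurd (h ⟨n, rfl⟩ hc.le) (not_le.2 hc)
    have hpre : ∀ n, L n <+: L N := by
      intro n
      rcases le_total n N with h | h
      · exact mono _ _ h
      · rw [(mono _ _ h).eq_of_length_le (hN n)]
    refine ⟨Sum.inl (L N), hT N, fun n => ?_, fun m => ⟨N, ⟨List.drop m _, List.take_append_drop _ _⟩⟩, Or.inr hB⟩
    exact (List.prefix_iff_eq_take.1 (hpre n)).symm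
  · have hB' := hB
    push Not at hB
    choose f hf using hB
    let v : ℕ → E := fun i => (L (f i))[i]'(hf i)
    have hv : ∀ n i (h : i < (L n).length), v i = (L n)[i] := by
      intro n i h
      rcases le_total n (f i) with h' | h'
      · exact ((mono _ _ h').getElem h).symm
      · exact ((mono _ _ h').getElem (hf i))
    have hp : ∀ n m, m ≤ (L n).length → pref v m = (L n).take m := by
      intro n m hm
      apply List.ext_getElem
      · simp [pref, hm]
      · intro i h1 h2
        simp only [pref, List.getElem_map, List.getElem_range, List.getElem_take]
        exact hv _ _ _
    refine ⟨Sum.inr v, fun m => ?_, fun n => ?_, fun m => ⟨f m, ?_⟩, Or.inl rfl⟩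
    · rw [hp (f m) m (hf m).le]
      exact hP _ ((L (f m)).drop m) (by rw [List.take_append_drop]; exact hT _)
    · simpa [prefOf] using hp n _ le_rfl
    · show pref v m <+: _
      rw [hp (f m) m (hf m).le]
      exact ⟨List.drop m _, List.take_append_drop _ _⟩

/-- Every infinite trace of a parallel composition `P ‖_A Q` decomposes into
component traces, at least one of which is infinite. -/
theorem inft_parallel [Fintype E] (A : Set E) (T₁ T₂ : Set (List E))
    (h₁ : PrefixClosed T₁) (h₂ : PrefixClosed T₂) (u : ℕ → E)
    (hu : InfTrace {w | ∃ s ∈ T₁, ∃ t ∈ T₂, Sync A s t w} u) :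
    ∃ x y : List E ⊕ (ℕ → E), MemTr T₁ x ∧ MemTr T₂ y ∧ InfSyncG A x y u ∧
      (x.isRight = true ∨ y.isRight = true) := by
  let L : Bool → (ℕ → Bool) → ℕ → List E := fun b c n => F (fun i => u i ∈ A ∨ c i = b) u n
  have hLp : ∀ b c n, L b c n <+: L b c (n+1) := fun b c n => List.prefix_append _ _
  have pc : ∀ {T : Set (List E)}, PrefixClosed T → ∀ {s t}, s <+: t → t ∈ T → s ∈ T := by
    rintro T hT s _ ⟨r, rfl⟩ h
    exact hT _ _ h
  let K : ℕ → Set (ℕ → Bool) := fun n => {c | L true c n ∈ T₁} ∩ {c | L false c n ∈ T₂}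
  have hKc : ∀ n, IsClosed (K n) := fun n =>
    (show IsClosed {c | L true c n ∈ T₁} from ⟨F_locConst A u true n T₁ᶜ⟩).inter (show IsClosed {c | L false c n ∈ T₂} from ⟨F_locConst A u false n T₂ᶜ⟩)
  obtain ⟨c, hc⟩ : (⋂ n, K n).Nonempty := by
    apply IsCompact.nonempty_iInter_of_sequence_nonempty_isCompact_isClosed K
    · intro n c hc
      exact ⟨pc h₁ (hLp _ _ _) hc.1, pc h₂ (hLp _ _ _) hc.2⟩
    · intro n
      obtain ⟨s, hs, t, ht, h⟩ := hu n
      obtain ⟨c, h1, h2⟩ := sync_F h u n rfl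
      exact ⟨c, pc h₁ h1 hs, pc h₂ h2 ht⟩
    · exact (hKc 0).isCompact
    · exact hKc
  rw [Set.mem_iInter] at hc
  obtain ⟨x, hx, hxL, hxc, hxB⟩ := chain_limit T₁ (L true c) (hLp _ _) h₁ (fun n => (hc n).1)
  obtain ⟨y, hy, hyL, hyc, hyB⟩ := chain_limit T₂ (L false c) (hLp _ _) h₂ (fun n => (hc n).2)
  refine ⟨x, y, hx, hy, ⟨fun n => (L true c n).length, fun n => (L false c n).length,
    monotone_nat_of_le_succ fun n => (hLp _ _ _).length_le,
    monotone_nat_of_le_succ fun n => (hLp _ _ _).length_le, ?_, ?_, ?_⟩, ?_⟩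
  · intro m
    obtain ⟨n, h⟩ := hxc m
    exact ⟨n, by rw [hxL]; exact h⟩
  · intro m
    obtain ⟨n, h⟩ := hyc m
    exact ⟨n, by rw [hyL]; exact h⟩
  · intro n
    simp only [hxL, hyL]
    exact F_sync A n u c
  · rcases hxB with h | ⟨B, hB⟩
    · exact Or.inl h
    rcases hyB with h | ⟨B', hB'⟩
    · exact Or.inr h
    exfalso
    have hlen : ∀ n, n ≤ (L true c n).length + (L false c n).length := by
      intro n
      induction n with
      | zero => simp
      | succ n ih =>
        have e : ∀ b, (L b c (n+1)).length =
            (L b c n).length + (if u n ∈ A ∨ c n = b then [u n] else []).length := by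
          intro b
          simp only [L, F, List.length_append]
          congr
        rw [e, e]
        cases h : c n <;> simp <;> omega
    have := hlen (B + B' + 1)
    have := hB (B + B' + 1)
    have := hB' (B + B' + 1)
    omega

end CSPLL
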